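/- Let M and N be nonempty closed bounded convex subsets of a Hilbert space X and let F : M ∪ N → M ∪ N satisfy (i) F(M) ⊆ N and F(N) ⊆ M, and (ii) ‖Fw − Fz‖ ≤ ‖w − z‖ for all w ∈ M, z ∈ N. Suppose F(M) is contained in a compact subset of N. Fix ε ∈ (0, 1/2) and sequences η_n, δ_n ∈ (ε, 1−ε). Then for any w_0 ∈ M_0, the sequence defined by w_{n+1} = P^n((1−η_n) w_n + η_n P_M(F((1−δ_n) w_n + δ_n P_M F w_n))), where P = P_M ∘ P_N, converges to a point w ∈ M_0 satisfying ‖w − Fw‖ = d(M,N). -/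

import Mathlib

/-!
If `w₀ ∈ M₀` has the partner `z₀ ∈ N`, the gap vector `h = z₀ - w₀` satisfies
`‖h‖² ≤ ⟪h, n - m⟫` for all `m ∈ M`, `n ∈ N` (`gap_inner_le`): it is the unique element of least
norm of `N - M`. Hence `M₀ = M ∩ (N - h)`, `P_N` and `P_M` act on `M₀` and on `M₀ + h` as
translations by `h` and `-h`, and `P = P_M ∘ P_N` is the identity on `M₀`. Since `F` does not
increase the distance `‖h‖`, it maps `M₀` into `M₀ + h` and commutes with the translation.
Differences of points of `M₀` are orthogonal to `h`, so the Pythagorean theorem turns the relative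
nonexpansiveness of `F` into ordinary nonexpansiveness of `G = P_M ∘ F = F - h` on `M₀`.

The iteration is therefore the classical Ishikawa iteration of a nonexpansive self-map `G` of the
closed convex set `M₀` with relatively compact range. Such a `G` has a fixed point
(`exists_fixedPoint_of_compact_range`), the iteration is Fejér monotone with respect to every fixed
point with a quantitative decrease (`ishikawa_step`), so `‖w n - G (w n)‖ → 0`, and compactness
yields convergence to a fixed point (`ishikawa_tendsto`). Finally `G x = x` means `F x = x + h`.
-/

open Filter Topology
open scoped RealInnerProductSpace

section Ishikawa

variable {X : Type*} [NormedAddCommGroup X] [InnerProductSpace ℝ X]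

/-- Variational inequality for a nearest point `v` of a convex set to `u`. -/
lemma inner_nearest_le {K : Set X} (hK : Convex ℝ K) {u v : X} (hv : v ∈ K)
    (h : ∀ y ∈ K, ‖u - v‖ ≤ ‖u - y‖) : ∀ y ∈ K, ⟪u - v, y - v⟫ ≤ 0 := by
  have : Nonempty K := ⟨⟨v, hv⟩⟩
  refine (norm_eq_iInf_iff_real_inner_le_zero hK hv).1 (le_antisymm ?_ ?_)
  · exact le_ciInf fun y => h y y.2
  · exact ciInf_le (f := fun y : K => ‖u - y‖)
      ⟨0, by rintro _ ⟨y, rfl⟩; exact norm_nonneg _⟩ ⟨v, hv⟩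

lemma gap_inner_le {M N : Set X} (hM : Convex ℝ M) (hN : Convex ℝ N) {w₀ z₀ : X}
    (hw : w₀ ∈ M) (hz : z₀ ∈ N) (hmin : ∀ m ∈ M, ∀ n ∈ N, ‖w₀ - z₀‖ ≤ ‖m - n‖) :
    ∀ m ∈ M, ∀ n ∈ N, ‖z₀ - w₀‖ ^ 2 ≤ ⟪z₀ - w₀, n - m⟫ := by
  intro m hm n hn
  have h1 := inner_nearest_le hN hz (fun y hy => hmin w₀ hw y hy) n hn
  have h2 := inner_nearest_le (u := z₀) hM hw
    (fun y hy => by rw [norm_sub_rev, norm_sub_rev z₀ y]; exact hmin y hy z₀ hz) m hm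
  have e : n - m = (n - z₀) + (z₀ - w₀) - (m - w₀) := by abel
  rw [e, inner_sub_right, inner_add_right, real_inner_self_eq_norm_sq]
  rw [← neg_sub z₀ w₀, inner_neg_left] at h1
  linarith

/-- Uniqueness of the gap vector. -/
lemma eq_gap {h v : X} (h1 : ‖h‖ ^ 2 ≤ ⟪h, v⟫) (h2 : ‖v‖ ≤ ‖h‖) : v = h := by
  have h3 := norm_sub_sq_real v h
  rw [real_inner_comm] at h3
  have h4 : ‖v‖ ^ 2 ≤ ‖h‖ ^ 2 := by gcongr
  have h5 : ‖v - h‖ ^ 2 = 0 := le_antisymm (by linarith) (sq_nonneg _)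
  exact sub_eq_zero.1 (norm_eq_zero.1 (pow_eq_zero_iff two_ne_zero |>.1 h5))

lemma norm_convexComb_sub_sq (t : ℝ) (a b p : X) :
    ‖(1 - t) • a + t • b - p‖ ^ 2 =
      (1 - t) * ‖a - p‖ ^ 2 + t * ‖b - p‖ ^ 2 - t * (1 - t) * ‖a - b‖ ^ 2 := by
  have e1 : (1 - t) • a + t • b - p = (1 - t) • (a - p) + t • (b - p) := by module
  have e2 : a - b = (a - p) - (b - p) := by abel
  rw [e1, e2, norm_add_sq_real, norm_sub_sq_real (a - p), norm_smul, norm_smul, mul_pow, mul_pow,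
    real_inner_smul_left, real_inner_smul_right]
  simp only [Real.norm_eq_abs, sq_abs]
  ring

/-- Fixed points are limits of the fixed points of the contractions
`x ↦ (1 - t) • G x + t • w₀` as `t → 0`. -/
lemma exists_fixedPoint_of_compact_range [CompleteSpace X] {K C : Set X} (hKc : IsClosed K)
    (hK : Convex ℝ K) {w₀ : X} (hw₀ : w₀ ∈ K) {G : X → X} (hG : ∀ x ∈ K, G x ∈ K)
    (hGn : ∀ x ∈ K, ∀ y ∈ K, ‖G x - G y‖ ≤ ‖x - y‖) (hC : IsCompact C)
    (hGC : ∀ x ∈ K, G x ∈ C) : ∃ p ∈ K, G p = p := by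
  have key : ∀ n : ℕ, ∃ x ∈ K,
      (1 - 1 / ((n : ℝ) + 1)) • G x + (1 / ((n : ℝ) + 1)) • w₀ = x := by
    intro n
    set t : ℝ := 1 / ((n : ℝ) + 1) with ht
    have ht0 : 0 < t := by positivity
    have ht1 : t ≤ 1 := by
      rw [ht, div_le_one (by positivity)]
      linarith [(Nat.cast_nonneg n : (0 : ℝ) ≤ n)]
    have hmaps : Set.MapsTo (fun x => (1 - t) • G x + t • w₀) K K := fun x hx =>
      hK (hG x hx) hw₀ (by linarith) ht0.le (by ring)
    have hcontr : ContractingWith (Real.toNNReal (1 - t)) (hmaps.restrict _ K K) := by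
      refine ⟨by rw [Real.toNNReal_lt_one]; linarith, ?_⟩
      refine LipschitzWith.of_dist_le_mul fun x y => ?_
      rw [Subtype.dist_eq, Subtype.dist_eq, dist_eq_norm, dist_eq_norm,
        Real.coe_toNNReal _ (by linarith)]
      have e : ((1 - t) • G x + t • w₀) - ((1 - t) • G y + t • w₀)
          = (1 - t) • (G x - G y) := by module
      simp only [Set.MapsTo.val_restrict_apply]
      rw [e, norm_smul, Real.norm_of_nonneg (by linarith)]
      exact mul_le_mul_of_nonneg_left (hGn x x.2 y y.2) (by linarith)
    obtain ⟨x, hx, hfx, -⟩ := hcontr.exists_fixedPoint' hKc.isComplete hmaps hw₀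
      (edist_ne_top _ _)
    exact ⟨x, hx, hfx⟩
  choose x hxK hx using key
  obtain ⟨p, -, φ, hφ, hlim⟩ := hC.tendsto_subseq fun n => hGC (x n) (hxK n)
  have ht := (tendsto_one_div_add_atTop_nhds_zero_nat (𝕜 := ℝ)).comp hφ.tendsto_atTop
  have hxlim : Tendsto (fun n => x (φ n)) atTop (𝓝 p) := by
    have h1 := ((tendsto_const_nhds (x := (1 : ℝ))).sub ht).smul hlim |>.add
      (ht.smul (tendsto_const_nhds (x := w₀)))
    simp only [sub_zero, one_smul, zero_smul, add_zero] at h1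
    exact h1.congr fun n => hx (φ n)
  have hp : p ∈ K := hKc.mem_of_tendsto hxlim (Eventually.of_forall fun n => hxK _)
  refine ⟨p, hp, tendsto_nhds_unique ?_ hlim⟩
  rw [tendsto_iff_norm_sub_tendsto_zero] at hxlim ⊢
  exact squeeze_zero (fun _ => norm_nonneg _) (fun n => hGn _ (hxK _) _ hp) hxlim

lemma ishikawa_step {K : Set X} (hK : Convex ℝ K) {G : X → X} (hG : ∀ x ∈ K, G x ∈ K)
    (hGn : ∀ x ∈ K, ∀ y ∈ K, ‖G x - G y‖ ≤ ‖x - y‖) {ε s t : ℝ} (hε : 0 < ε)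
    (hs : s ∈ Set.Ioo ε (1 - ε)) (ht : t ∈ Set.Ioo ε (1 - ε)) {x p : X} (hx : x ∈ K)
    (hp : p ∈ K) (hGp : G p = p) :
    ‖(1 - s) • x + s • G ((1 - t) • x + t • G x) - p‖ ^ 2
      ≤ ‖x - p‖ ^ 2 - ε ^ 3 * ‖x - G x‖ ^ 2 := by
  obtain ⟨hs1, hs2⟩ := hs
  obtain ⟨ht1, ht2⟩ := ht
  have hy : (1 - t) • x + t • G x ∈ K :=
    hK hx (hG x hx) (by linarith) (by linarith) (by ring)
  have h1 : ‖G ((1 - t) • x + t • G x) - p‖ ^ 2 ≤ ‖(1 - t) • x + t • G x - p‖ ^ 2 := by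
    have := hGn _ hy p hp
    rw [hGp] at this
    gcongr
  have h2 : ‖G x - p‖ ^ 2 ≤ ‖x - p‖ ^ 2 := by
    have := hGn _ hx p hp
    rw [hGp] at this
    gcongr
  rw [norm_convexComb_sub_sq t] at h1
  rw [norm_convexComb_sub_sq s]
  have h3 : 0 ≤ s * (1 - s) * ‖x - G ((1 - t) • x + t • G x)‖ ^ 2 :=
    mul_nonneg (mul_nonneg (by linarith) (by linarith)) (sq_nonneg _)
  have h4 : t * ‖G x - p‖ ^ 2 ≤ t * ‖x - p‖ ^ 2 :=
    mul_le_mul_of_nonneg_left h2 (by linarith)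
  have h5 : s * ‖G ((1 - t) • x + t • G x) - p‖ ^ 2
      ≤ s * (‖x - p‖ ^ 2 - t * (1 - t) * ‖x - G x‖ ^ 2) :=
    mul_le_mul_of_nonneg_left (by linarith) (by linarith)
  have h6 : ε ^ 3 ≤ s * (t * (1 - t)) := by
    calc ε ^ 3 = ε * (ε * ε) := by ring
      _ ≤ s * (t * (1 - t)) := by gcongr <;> linarith
  have h7 := mul_le_mul_of_nonneg_right h6 (sq_nonneg ‖x - G x‖)
  linarith

/-- Ishikawa's theorem for a nonexpansive self-map with relatively compact range. -/
lemma ishikawa_tendsto [CompleteSpace X] {K C : Set X} (hKc : IsClosed K)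
    (hK : Convex ℝ K) {G : X → X} (hG : ∀ x ∈ K, G x ∈ K)
    (hGn : ∀ x ∈ K, ∀ y ∈ K, ‖G x - G y‖ ≤ ‖x - y‖) (hC : IsCompact C)
    (hGC : ∀ x ∈ K, G x ∈ C) {ε : ℝ} (hε : 0 < ε) {η δ : ℕ → ℝ}
    (hη : ∀ n, η n ∈ Set.Ioo ε (1 - ε)) (hδ : ∀ n, δ n ∈ Set.Ioo ε (1 - ε))
    {w : ℕ → X} (hwK : ∀ n, w n ∈ K)
    (hw : ∀ n, w (n + 1) =
      (1 - η n) • w n + η n • G ((1 - δ n) • w n + δ n • G (w n))) :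
    ∃ x ∈ K, Tendsto w atTop (𝓝 x) ∧ G x = x := by
  have step : ∀ p ∈ K, G p = p → ∀ n,
      ‖w (n + 1) - p‖ ^ 2 ≤ ‖w n - p‖ ^ 2 - ε ^ 3 * ‖w n - G (w n)‖ ^ 2 := by
    intro p hp hGp n
    rw [hw n]
    exact ishikawa_step hK hG hGn hε (hη n) (hδ n) (hwK n) hp hGp
  have anti : ∀ p ∈ K, G p = p → Antitone fun n => ‖w n - p‖ ^ 2 := fun p hp hGp =>
    antitone_nat_of_succ_le fun n => by
      have := step p hp hGp n
      have : 0 ≤ ε ^ 3 * ‖w n - G (w n)‖ ^ 2 := by positivity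
      linarith
  have conv : ∀ p ∈ K, G p = p → ∃ l, Tendsto (fun n => ‖w n - p‖ ^ 2) atTop (𝓝 l) :=
    fun p hp hGp => ⟨_, tendsto_atTop_ciInf (anti p hp hGp)
      ⟨0, by rintro _ ⟨n, rfl⟩; positivity⟩⟩
  have hres : Tendsto (fun n => w n - G (w n)) atTop (𝓝 0) := by
    obtain ⟨p, hp, hGp⟩ := exists_fixedPoint_of_compact_range hKc hK (hwK 0) hG hGn hC hGC
    obtain ⟨l, hl⟩ := conv p hp hGp
    have h1 := (hl.sub (hl.comp (tendsto_add_atTop_nat 1))).div_const (ε ^ 3)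
    rw [sub_self, zero_div] at h1
    have h2 : Tendsto (fun n => ‖w n - G (w n)‖ ^ 2) atTop (𝓝 0) := by
      refine squeeze_zero (fun _ => by positivity) (fun n => ?_) h1
      rw [le_div_iff₀ (by positivity)]
      have := step p hp hGp n
      simp only [Function.comp]
      linarith
    rw [tendsto_zero_iff_norm_tendsto_zero]
    simpa using h2.sqrt
  obtain ⟨x, -, φ, hφ, hlim⟩ := hC.tendsto_subseq fun n => hGC (w n) (hwK n)
  have hwlim : Tendsto (fun n => w (φ n)) atTop (𝓝 x) := by
    have h1 := (hres.comp hφ.tendsto_atTop).add hlim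
    rw [zero_add] at h1
    exact h1.congr fun n => by simp
  have hx : x ∈ K := hKc.mem_of_tendsto hwlim (Eventually.of_forall fun n => hwK _)
  have hGx : G x = x := by
    refine tendsto_nhds_unique ?_ hlim
    rw [tendsto_iff_norm_sub_tendsto_zero] at hwlim ⊢
    exact squeeze_zero (fun _ => norm_nonneg _) (fun n => hGn _ (hwK _) _ hx) hwlim
  refine ⟨x, hx, ?_, hGx⟩
  -- Fejér monotonicity with respect to `x` upgrades subsequential convergence.
  obtain ⟨l, hl⟩ := conv x hx hGx
  have h0 : Tendsto (fun n => ‖w (φ n) - x‖ ^ 2) atTop (𝓝 0) := by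
    simpa using (tendsto_iff_norm_sub_tendsto_zero.1 hwlim).pow 2
  have hl0 : l = 0 := tendsto_nhds_unique (hl.comp hφ.tendsto_atTop) h0
  rw [hl0] at hl
  rw [tendsto_iff_norm_sub_tendsto_zero]
  simpa using hl.sqrt

end Ishikawa

/-- Corollary 2.9: for a cyclic relatively nonexpansive map `F` (`F(M) ⊆ N`,
`F(N) ⊆ M`) on bounded closed convex subsets of a Hilbert space, with `F '' M`
contained in a compact subset of `N`, the Ishikawa-type iteration combining the
projected map `P_M ∘ F` with the von Neumann projections `P = P_M ∘ P_N`, started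
at `w 0 ∈ M₀`, converges to a best proximity point `x ∈ M₀` of `F`. -/
theorem ishikawa_proj_vonNeumann_tendsto_bestProximityPoint_of_mem_M0
    {X : Type*} [NormedAddCommGroup X] [InnerProductSpace ℝ X] [CompleteSpace X]
    (M N : Set X)
    (hMne : M.Nonempty) (hMb : Bornology.IsBounded M) (hMcl : IsClosed M)
    (hMconv : Convex ℝ M)
    (hNne : N.Nonempty) (hNb : Bornology.IsBounded N) (hNcl : IsClosed N)
    (hNconv : Convex ℝ N)
    (F : X → X) (hFM : ∀ w ∈ M, F w ∈ N) (hFN : ∀ z ∈ N, F z ∈ M)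
    (hFne : ∀ w ∈ M, ∀ z ∈ N, ‖F w - F z‖ ≤ ‖w - z‖)
    (hcpt : ∃ C : Set X, C ⊆ N ∧ IsCompact C ∧ F '' M ⊆ C)
    (PM PN : X → X)
    (hPM : ∀ x : X, PM x ∈ M ∧ ∀ y ∈ M, ‖x - PM x‖ ≤ ‖x - y‖)
    (hPN : ∀ x : X, PN x ∈ N ∧ ∀ y ∈ N, ‖x - PN x‖ ≤ ‖x - y‖)
    (ε : ℝ) (hε : ε ∈ Set.Ioo (0 : ℝ) (1 / 2))
    (η δ : ℕ → ℝ)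
    (hη : ∀ n, η n ∈ Set.Ioo ε (1 - ε)) (hδ : ∀ n, δ n ∈ Set.Ioo ε (1 - ε))
    (w : ℕ → X)
    (hw0 : w 0 ∈
      {x ∈ M | ∃ z ∈ N, ‖x - z‖ = sInf {r : ℝ | ∃ a ∈ M, ∃ b ∈ N, r = ‖a - b‖}})
    (hw : ∀ n, w (n + 1) = (fun x => PM (PN x))^[n]
      ((1 - η n) • w n + η n • PM (F ((1 - δ n) • w n + δ n • PM (F (w n)))))) :
    ∃ x ∈ {x ∈ M | ∃ z ∈ N, ‖x - z‖ = sInf {r : ℝ | ∃ a ∈ M, ∃ b ∈ N, r = ‖a - b‖}},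
      Tendsto w atTop (𝓝 x) ∧
      ‖x - F x‖ = sInf {r : ℝ | ∃ a ∈ M, ∃ b ∈ N, r = ‖a - b‖} := by
  set d := sInf {r : ℝ | ∃ a ∈ M, ∃ b ∈ N, r = ‖a - b‖} with hd
  obtain ⟨hw0M, z₀, hz₀, hwz⟩ := hw0
  have hdle : ∀ m ∈ M, ∀ n ∈ N, d ≤ ‖m - n‖ := fun m hm n hn =>
    csInf_le ⟨0, by rintro _ ⟨a, -, b, -, rfl⟩; exact norm_nonneg _⟩ ⟨m, hm, n, hn, rfl⟩
  have hgap := gap_inner_le hMconv hNconv hw0M hz₀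
    (fun m hm n hn => hwz.trans_le (hdle m hm n hn))
  obtain ⟨h, hh⟩ : ∃ h, h = z₀ - w 0 := ⟨_, rfl⟩
  have hhd : ‖h‖ = d := by rw [hh, norm_sub_rev, hwz]
  rw [← hh] at hgap
  have huniq : ∀ m ∈ M, ∀ n ∈ N, ‖n - m‖ ≤ ‖h‖ → n = m + h := fun m hm n hn hle => by
    rw [← eq_gap (hgap m hm n hn) hle]; abel
  obtain ⟨C, hCN, hC, hFC⟩ := hcpt
  -- `K` is `M₀`, described through the gap vector.
  let K : Set X := M ∩ (fun x => x + h) ⁻¹' N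
  have hKc : IsClosed K := hMcl.inter (hNcl.preimage (by fun_prop))
  have hK : Convex ℝ K := hMconv.inter (hNconv.translate_preimage_left h)
  have hPNK : ∀ x ∈ K, PN x = x + h := fun x hx =>
    huniq x hx.1 _ (hPN x).1 (by
      rw [norm_sub_rev]; simpa using (hPN x).2 (x + h) hx.2)
  have hPMK : ∀ x ∈ K, PM (x + h) = x := fun x hx => by
    have := huniq _ (hPM (x + h)).1 _ hx.2 (by simpa using (hPM (x + h)).2 x hx.1)
    exact (add_right_cancel this).symm
  have hPK : ∀ x ∈ K, PM (PN x) = x := fun x hx => by rw [hPNK x hx, hPMK x hx]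
  have hFcomm : ∀ x ∈ K, F x = F (x + h) + h := fun x hx =>
    huniq _ (hFN _ hx.2) _ (hFM _ hx.1) (by simpa using hFne x hx.1 _ hx.2)
  have hFK : ∀ x ∈ K, F (x + h) ∈ K := fun x hx =>
    ⟨hFN _ hx.2, by
      change F (x + h) + h ∈ N
      rw [← hFcomm x hx]; exact hFM _ hx.1⟩
  have hGF : ∀ x ∈ K, PM (F x) = F (x + h) := fun x hx => by
    rw [hFcomm x hx, hPMK _ (hFK x hx)]
  have hGK : ∀ x ∈ K, PM (F x) ∈ K := fun x hx => by rw [hGF x hx]; exact hFK x hx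
  have horth : ∀ x ∈ K, ∀ y ∈ K, ⟪x - y, h⟫ = 0 := by
    have hnn : ∀ x ∈ K, ∀ y ∈ K, 0 ≤ ⟪x - y, h⟫ := fun x hx y hy => by
      have h1 := hgap y hy.1 _ hx.2
      have e : x + h - y = (x - y) + h := by abel
      rw [e, inner_add_right, real_inner_self_eq_norm_sq, real_inner_comm] at h1
      linarith
    intro x hx y hy
    have h1 := hnn y hy x hx
    rw [← neg_sub, inner_neg_left] at h1
    linarith [hnn x hx y hy]
  have hGn : ∀ x ∈ K, ∀ y ∈ K, ‖PM (F x) - PM (F y)‖ ≤ ‖x - y‖ := by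
    intro x hx y hy
    have h1 := hFne x hx.1 _ hy.2
    have e1 : F x - F (y + h) = (PM (F x) - PM (F y)) + h := by
      rw [hGF x hx, hGF y hy, hFcomm x hx]; abel
    have e2 : x - (y + h) = (x - y) - h := by abel
    rw [e1, e2] at h1
    have h2 : ‖(PM (F x) - PM (F y)) + h‖ ^ 2 ≤ ‖(x - y) - h‖ ^ 2 := by gcongr
    rw [norm_add_sq_real, norm_sub_sq_real (x - y), horth x hx y hy,
      horth _ (hGK x hx) _ (hGK y hy)] at h2
    exact (sq_le_sq₀ (norm_nonneg _) (norm_nonneg _)).1 (by linarith)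
  have hGC : ∀ x ∈ K, PM (F x) ∈ (fun z => z - h) '' C := fun x hx =>
    ⟨F x, hFC ⟨x, hx.1, rfl⟩, by
      simp only [hGF x hx]; rw [hFcomm x hx]; abel⟩
  have hstep : ∀ n, w n ∈ K →
      (1 - η n) • w n + η n • PM (F ((1 - δ n) • w n + δ n • PM (F (w n)))) ∈ K := by
    intro n hn
    have hη1 := hη n
    have hδ1 := hδ n
    simp only [Set.mem_Ioo] at hε hη1 hδ1
    exact hK hn (hGK _ (hK hn (hGK _ hn) (by linarith) (by linarith) (by ring)))
      (by linarith) (by linarith) (by ring)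
  have hwK : ∀ n, w n ∈ K := by
    intro n
    induction n with
    | zero => exact ⟨hw0M, by simpa [hh] using hz₀⟩
    | succ n ih =>
      rw [hw n, Function.iterate_fixed (hPK _ (hstep n ih))]
      exact hstep n ih
  obtain ⟨x, hx, hlim, hGx⟩ := ishikawa_tendsto (G := fun x => PM (F x)) hKc hK hGK hGn
    (hC.image (by fun_prop)) hGC hε.1 hη hδ hwK
    (fun n => by rw [hw n, Function.iterate_fixed (hPK _ (hstep n (hwK n)))])
  refine ⟨x, ⟨hx.1, x + h, hx.2, by simpa using hhd⟩, hlim, ?_⟩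
  have hFx : F x = x + h := by
    rw [hFcomm x hx, ← hGF x hx]
    exact congrArg (· + h) hGx
  rw [hFx]
  simpa using hhd
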